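/- Stability with eigenfunction convergence: let 0 < γ < 2 and for ε > 0 set μ_ε := λ̄^ε_γ(F) := sup{μ ∈ ℝ : there exists u continuous on [0,1), C² on (0,1), with u > 0 on [0,1) and F(D(u''(r), u'(r)/r)) + μ·u(r)·(r²+ε²)^{−γ/2} ≤ 0 for all r ∈ (0,1)}. Suppose that for each ε ∈ (0,1] there is a function u_ε, continuous on [0,1], C² on [0,1) with u_ε'(0) = 0, u_ε > 0 on [0,1), u_ε(0) = 1, u_ε(1) = 0, solving F(D(u_ε''(r), u_ε'(r)/r)) + μ_ε·u_ε(r)·(r²+ε²)^{−γ/2} = 0 on (0,1). Then lim_{ε→0⁺} μ_ε = λ̄'_γ(F), and there exist a sequence ε_n → 0⁺ and a function u, continuous on [0,1] and C² on (0,1), with u(0) = 1, u > 0 on [0,1), u(1) = 0, satisfying F(D(u''(r), u'(r)/r)) + λ̄'_γ(F)·u(r)·r^{−γ} = 0 on (0,1), such that u_{ε_n} converges to u uniformly on [0,1]. -/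

import Mathlib

open Set Real Filter MeasureTheory Matrix

noncomputable section

/-- The `N × N` diagonal matrix with first diagonal entry `a` and the remaining
`N - 1` diagonal entries equal to `b`. -/
def Dmat (N : ℕ) (a b : ℝ) : Matrix (Fin N) (Fin N) ℝ :=
  Matrix.diagonal (fun i => if (i : ℕ) = 0 then a else b)

/-- Uniform ellipticity with constants `0 < lam ≤ Lam`. -/
def UnifElliptic (N : ℕ) (lam Lam : ℝ) (F : Matrix (Fin N) (Fin N) ℝ → ℝ) : Prop :=
  ∀ M P : Matrix (Fin N) (Fin N) ℝ, M.IsSymm → P.PosSemidef →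
    lam * P.trace ≤ F (M + P) - F M ∧ F (M + P) - F M ≤ Lam * P.trace

/-- Rotation invariance. -/
def RotInvariant (N : ℕ) (F : Matrix (Fin N) (Fin N) ℝ → ℝ) : Prop :=
  ∀ O M : Matrix (Fin N) (Fin N) ℝ, Oᵀ * O = 1 → F (Oᵀ * M * O) = F M

/-- Positive one-homogeneity. -/
def PosHomog (N : ℕ) (F : Matrix (Fin N) (Fin N) ℝ → ℝ) : Prop :=
  ∀ t : ℝ, 0 < t → ∀ M : Matrix (Fin N) (Fin N) ℝ, F (t • M) = t * F M

/-- The radial principal eigenvalue `λ̄'_γ(F)` on the punctured unit ball. -/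
def radialEV (N : ℕ) (F : Matrix (Fin N) (Fin N) ℝ → ℝ) (γ : ℝ) : ℝ :=
  sSup {μ : ℝ | ∃ u : ℝ → ℝ, ContDiffOn ℝ 2 u (Ioo 0 1) ∧
    (∀ r ∈ Ioo (0:ℝ) 1, 0 < u r) ∧
    (∀ r ∈ Ioo (0:ℝ) 1,
      F (Dmat N (deriv (deriv u) r) (deriv u r / r)) + μ * u r * r ^ (-γ) ≤ 0)}


/-- The regularized eigenvalue `λ̄^ε_γ(F)`, where the singular potential `r^{-γ}` is
replaced by `(r² + ε²)^{-γ/2}`. -/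
def epsEV (N : ℕ) (F : Matrix (Fin N) (Fin N) ℝ → ℝ) (γ ε : ℝ) : ℝ :=
  sSup {μ : ℝ | ∃ u : ℝ → ℝ, ContinuousOn u (Ico 0 1) ∧ ContDiffOn ℝ 2 u (Ioo 0 1) ∧
    (∀ r ∈ Ico (0:ℝ) 1, 0 < u r) ∧
    (∀ r ∈ Ioo (0:ℝ) 1,
      F (Dmat N (deriv (deriv u) r) (deriv u r / r))
        + μ * u r * (r ^ 2 + ε ^ 2) ^ (-(γ / 2)) ≤ 0)}


/- Since `Ñ₊ ≥ 2`, where the difference `w` of two ordered radial functions decreases, its flux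
`r w'` increases, so that `w` would be unbounded above near the origin. Bounded above differences
are therefore nondecreasing, which replaces the maximum principle on the punctured ball and needs no
condition at the origin.

Compared with a supersolution, a positive Dirichlet solution is an eigenfunction for the largest
possible eigenvalue: a dilation makes the supersolution positive up to the boundary, and then the
smallest of its multiples lying above the eigenfunction could still be lowered. Hence `μ_ε` is
monotone in `ε` and converges, and the limit is the singular eigenvalue as soon as it has an
eigenfunction. The barrier `-r^(2 - γ)` bounds the slopes of the `u_ε` uniformly, the equation
bounds their second derivatives, and Arzelà–Ascoli produces this eigenfunction. -/

section RealAnalysis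

open scoped Topology

theorem min_zero_le_of_hasDerivAt_nonneg_of_neg {f f' : ℝ → ℝ} {a b : ℝ} (hab : a ≤ b)
    (hf : ∀ x ∈ Icc a b, HasDerivAt f (f' x) x)
    (hf' : ∀ x ∈ Icc a b, f x < 0 → 0 ≤ f' x) : min (f a) 0 ≤ f b := by
  by_contra! hlt
  obtain ⟨c, hbc, hc⟩ := exists_between hlt
  obtain ⟨d, hcd, hd⟩ := exists_between hc
  obtain ⟨hda, hd0⟩ := lt_min_iff.1 hd
  -- `-f` starts below the increasing line from `(a, -d)` and cannot cross it.
  set δ := (d - c) / (b - a + 1)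
  have hδ : 0 < δ := div_pos (by linarith) (by linarith)
  have hδc : δ * (b - a + 1) = d - c := div_mul_cancel₀ _ (by linarith)
  have hbarrier : -f b ≤ -d + δ * (b - a) := by
    refine image_le_of_deriv_right_lt_deriv_boundary' (f := fun x => -f x) (f' := fun x => -f' x)
      (B := fun x => -d + δ * (x - a)) (B' := fun _ => δ)
      (fun x hx => (hf x hx).neg.continuousAt.continuousWithinAt)
      (fun x hx => (hf x (Ico_subset_Icc_self hx)).neg.hasDerivWithinAt) ?_ (by fun_prop)
      (fun x _ => ?_) (fun x hx hfx => ?_) (right_mem_Icc.2 hab)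
    · simpa using hda.le
    · simpa using ((((hasDerivAt_id x).sub_const a).const_mul δ).const_add (-d)).hasDerivWithinAt
    · have hneg : f x < 0 := by linarith [mul_nonneg hδ.le (sub_nonneg.2 hx.1)]
      linarith [hf' x (Ico_subset_Icc_self hx) hneg]
  linarith

theorem not_bddAbove_image_of_hasDerivAt_le_neg_div {w w' : ℝ → ℝ} {R c : ℝ} (hR : 0 < R)
    (hc : 0 < c) (hw : ∀ r ∈ Ioo 0 R, HasDerivAt w (w' r) r)
    (hw' : ∀ r ∈ Ioo 0 R, w' r ≤ -c / r) : ¬ BddAbove (w '' Ioo 0 R) := by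
  rintro ⟨B, hB⟩
  have hderiv : ∀ r ∈ Ioo 0 R, HasDerivAt (fun x => w x + c * log x) (w' r + c * r⁻¹) r :=
    fun r hr => (hw r hr).add ((hasDerivAt_log hr.1.ne').const_mul c)
  have hanti : AntitoneOn (fun x => w x + c * log x) (Ioo 0 R) := by
    refine antitoneOn_of_hasDerivWithinAt_nonpos (f' := fun r => w' r + c * r⁻¹) (convex_Ioo _ _)
      (fun r hr => (hderiv r hr).continuousAt.continuousWithinAt) ?_ ?_ <;> rw [interior_Ioo]
    · exact fun r hr => (hderiv r hr).hasDerivWithinAt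
    · intro r hr
      have := hw' r hr
      rw [neg_div, div_eq_mul_inv] at this
      linarith
  have hmid : R / 2 ∈ Ioo 0 R := ⟨by linarith, by linarith⟩
  obtain ⟨r, hlog, hr⟩ := ((tendsto_log_nhdsGT_zero.eventually
    (eventually_lt_atBot ((w (R / 2) + c * log (R / 2) - B) / c))).and
      (Ioo_mem_nhdsGT hmid.1)).exists
  have hrR : r ∈ Ioo 0 R := ⟨hr.1, hr.2.trans hmid.2⟩
  have hle : w (R / 2) + c * log (R / 2) ≤ w r + c * log r := hanti hrR hmid hr.2.le
  rw [lt_div_iff₀ hc] at hlog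
  linarith [hB (mem_image_of_mem w hrR)]

/- Where `w' < 0` the flux `r * w'` is nondecreasing. So if it is negative at `r₀`, then it is at
most this negative value on all of `(0, r₀)`, and `w` blows up logarithmically at the origin. -/
theorem deriv_nonneg_of_bddAbove_of_flux {w w' w'' : ℝ → ℝ} {R : ℝ}
    (hw : ∀ r ∈ Ioo 0 R, HasDerivAt w (w' r) r) (hw' : ∀ r ∈ Ioo 0 R, HasDerivAt w' (w'' r) r)
    (hB : BddAbove (w '' Ioo 0 R))
    (hflux : ∀ r ∈ Ioo 0 R, w' r < 0 → 0 ≤ w' r + r * w'' r) {r₀ : ℝ} (hr₀ : r₀ ∈ Ioo 0 R) :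
    0 ≤ w' r₀ := by
  by_contra! hneg
  have hsub : Ioo 0 r₀ ⊆ Ioo 0 R := Ioo_subset_Ioo_right hr₀.2.le
  refine not_bddAbove_image_of_hasDerivAt_le_neg_div (c := -(r₀ * w' r₀)) hr₀.1
    (by linarith [mul_neg_of_pos_of_neg hr₀.1 hneg]) (fun r hr => hw r (hsub hr)) (fun r hr => ?_)
    (hB.mono (image_mono hsub))
  have hIcc : ∀ x ∈ Icc r r₀, x ∈ Ioo 0 R :=
    fun x hx => ⟨hr.1.trans_le hx.1, hx.2.trans_lt hr₀.2⟩
  have hmin : min (r * w' r) 0 ≤ r₀ * w' r₀ :=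
    min_zero_le_of_hasDerivAt_nonneg_of_neg (f := fun x => x * w' x)
      (f' := fun x => 1 * w' x + x * w'' x) hr.2.le
      (fun x hx => (hasDerivAt_id x).mul (hw' x (hIcc x hx)))
      (fun x hx hlt => by
        rw [one_mul]
        exact hflux x (hIcc x hx) (neg_of_mul_neg_right hlt (hIcc x hx).1.le))
  rw [neg_neg, le_div_iff₀ hr.1, mul_comm (w' r)]
  exact (min_le_iff.1 hmin).resolve_right (by linarith [mul_neg_of_pos_of_neg hr₀.1 hneg])

theorem hasDerivAt_rpow_mul {f : ℝ → ℝ} {f' r : ℝ} (k : ℝ) (hr : 0 < r)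
    (hf : HasDerivAt f f' r) :
    HasDerivAt (fun x => x ^ k * f x) (r ^ k * (f' + k * (f r / r))) r := by
  refine ((hasDerivAt_rpow_const (p := k) (Or.inl hr.ne')).mul hf).congr_deriv ?_
  rw [rpow_sub_one hr.ne']
  field_simp
  ring

section ContDiffOnTwo

variable {s : Set ℝ} {u : ℝ → ℝ}

theorem contDiffOn_one_deriv (hs : IsOpen s) (hu : ContDiffOn ℝ 2 u s) :
    ContDiffOn ℝ 1 (deriv u) s :=
  hu.deriv_of_isOpen hs (by norm_num)

theorem continuousOn_deriv_deriv (hs : IsOpen s) (hu : ContDiffOn ℝ 2 u s) :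
    ContinuousOn (deriv (deriv u)) s :=
  (contDiffOn_one_deriv hs hu).continuousOn_deriv_of_isOpen hs le_rfl

theorem hasDerivAt_of_contDiffOn_two (hs : IsOpen s) (hu : ContDiffOn ℝ 2 u s) {r : ℝ}
    (hr : r ∈ s) : HasDerivAt u (deriv u r) r :=
  ((hu.differentiableOn two_ne_zero).differentiableAt (hs.mem_nhds hr)).hasDerivAt

theorem hasDerivAt_deriv_of_contDiffOn_two (hs : IsOpen s) (hu : ContDiffOn ℝ 2 u s) {r : ℝ}
    (hr : r ∈ s) : HasDerivAt (deriv u) (deriv (deriv u) r) r :=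
  (((contDiffOn_one_deriv hs hu).differentiableOn one_ne_zero).differentiableAt
    (hs.mem_nhds hr)).hasDerivAt

variable {ι : Type*} {l : Filter ι} [l.NeBot] {f : ι → ℝ → ℝ} {p q : ℝ → ℝ}

theorem eqOn_deriv_of_tendstoLocallyUniformlyOn (hs : IsOpen s)
    (hf : ∀ i, ∀ x ∈ s, DifferentiableAt ℝ (f i) x)
    (hu : ∀ x ∈ s, Tendsto (fun i => f i x) l (𝓝 (u x)))
    (hp : TendstoLocallyUniformlyOn (fun i => deriv (f i)) p l s) :
    DifferentiableOn ℝ u s ∧ EqOn (deriv u) p s := by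
  have hder : ∀ x ∈ s, HasDerivAt u (p x) x := fun x hx =>
    hasDerivAt_of_tendstoLocallyUniformlyOn hs hp
      (Eventually.of_forall fun i y hy => (hf i y hy).hasDerivAt) hu hx
  exact ⟨fun x hx => (hder x hx).differentiableAt.differentiableWithinAt,
    fun x hx => (hder x hx).deriv⟩

theorem contDiffOn_two_of_tendstoLocallyUniformlyOn (hs : IsOpen s)
    (hf : ∀ i, ContDiffOn ℝ 2 (f i) s)
    (hu : ∀ x ∈ s, Tendsto (fun i => f i x) l (𝓝 (u x)))
    (hp : TendstoLocallyUniformlyOn (fun i => deriv (f i)) p l s)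
    (hq : TendstoLocallyUniformlyOn (fun i => deriv (deriv (f i))) q l s) :
    ContDiffOn ℝ 2 u s ∧ EqOn (deriv u) p s ∧ EqOn (deriv (deriv u)) q s := by
  obtain ⟨hdu, hup⟩ := eqOn_deriv_of_tendstoLocallyUniformlyOn hs
    (fun i x hx => (hasDerivAt_of_contDiffOn_two hs (hf i) hx).differentiableAt) hu hp
  obtain ⟨hddu, hpq⟩ := eqOn_deriv_of_tendstoLocallyUniformlyOn (u := deriv u) hs
    (fun i x hx => (hasDerivAt_deriv_of_contDiffOn_two hs (hf i) hx).differentiableAt)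
    (fun x hx => by simpa only [hup hx] using hp.tendsto_at hx) hq
  have hq_cont : ContinuousOn (deriv (deriv u)) s :=
    (hq.continuousOn (Frequently.of_forall fun i => continuousOn_deriv_deriv hs (hf i))).congr hpq
  have hone : ContDiffOn ℝ (0 + 1) (deriv u) s :=
    (contDiffOn_succ_iff_deriv_of_isOpen hs).2
      ⟨hddu, fun h => absurd h (by simp), contDiffOn_zero.2 hq_cont⟩
  refine ⟨?_, hup, hpq⟩
  rw [show (2 : WithTop ℕ∞) = 1 + 1 by norm_num]
  exact (contDiffOn_succ_iff_deriv_of_isOpen hs).2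
    ⟨hdu, fun h => absurd h (by simp), by simpa using hone⟩

end ContDiffOnTwo

theorem tendstoLocallyUniformlyOn_iff_tendsto_prod_nhds {ι X β : Type*} [TopologicalSpace X]
    [UniformSpace β] {l : Filter ι} {f : ι → X → β} {g : X → β} {s : Set X} (hs : IsOpen s)
    (hg : ContinuousOn g s) :
    TendstoLocallyUniformlyOn f g l s ↔
      ∀ x ∈ s, Tendsto (fun y : ι × X => f y.1 y.2) (l ×ˢ 𝓝 x) (𝓝 (g x)) := by
  rw [hs.tendstoLocallyUniformlyOn_iff_forall_tendsto]
  refine forall₂_congr fun x hx => ?_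
  have hgx : Tendsto (fun y : ι × X => (g x, g y.2)) (l ×ˢ 𝓝 x) (uniformity β) :=
    Uniform.tendsto_nhds_right.1 ((hg.continuousAt (hs.mem_nhds hx)).tendsto.comp tendsto_snd)
  rw [Uniform.tendsto_nhds_right]
  exact ⟨hgx.uniformity_trans, hgx.uniformity_symm.uniformity_trans⟩

theorem exists_subseq_tendstoLocallyUniformlyOn {X E : Type*} [TopologicalSpace X] [MetricSpace E]
    [ProperSpace E] {s : Set X} [LocallyCompactSpace s] [SigmaCompactSpace s] {f : ℕ → X → E}
    (hf : EquicontinuousOn f s) (hb : ∀ x ∈ s, Bornology.IsBounded (range fun n => f n x)) :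
    ∃ φ : ℕ → ℕ, StrictMono φ ∧ ∃ g : X → E, ContinuousOn g s ∧
      TendstoLocallyUniformlyOn (fun n => f (φ n)) g atTop s := by
  have hfs : Equicontinuous fun n => s.domRestrict (f n) := (equicontinuous_restrict_iff f).2 hf
  let F : ℕ → C(s, E) := fun n => ⟨s.domRestrict (f n), hfs.continuous n⟩
  have hF : Equicontinuous fun h : range F => (h : s → E) := by
    rintro x V hV
    filter_upwards [hfs x V hV] with y hy
    rintro ⟨-, n, rfl⟩
    exact hy n
  have : T2Space (UniformOnFun s E {K | IsCompact K}) :=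
    UniformOnFun.t2Space_of_covering sUnion_isCompact_eq_univ
  have hcompact : IsCompact (closure (range F)) :=
    ArzelaAscoli.isCompact_closure_of_isClosedEmbedding (𝔖 := {K | IsCompact K}) (fun _ => id)
      ContinuousMap.isUniformEmbedding_toUniformOnFunIsCompact.isClosedEmbedding
      (fun K _ => hF.equicontinuousOn K) fun _ _ x _ =>
        ⟨closure (range fun n => f n x), (hb x x.2).isCompact_closure,
          forall_mem_range.2 fun n => subset_closure (mem_range_self n)⟩
  obtain ⟨g, -, φ, hφ, hlim⟩ := hcompact.tendsto_subseq
    fun n => subset_closure (mem_range_self n)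
  refine ⟨φ, hφ, Function.extend Subtype.val g (f 0), ?_, ?_⟩
  · rw [continuousOn_iff_continuous_domRestrict, domRestrict_eq,
      Function.extend_comp Subtype.val_injective]
    exact g.continuous
  · rw [tendstoLocallyUniformlyOn_iff_tendstoLocallyUniformly_comp_coe,
      Function.extend_comp Subtype.val_injective]
    exact ContinuousMap.tendsto_iff_tendstoLocallyUniformly.1 hlim

theorem equicontinuousOn_of_dist_le {ι X α β : Type*} [TopologicalSpace X] [PseudoMetricSpace α]
    [PseudoMetricSpace β] {f : ι → X → α} {φ : X → β} {s : Set X} (hφ : ContinuousOn φ s)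
    (hf : ∀ i, ∀ x ∈ s, ∀ y ∈ s, dist (f i x) (f i y) ≤ dist (φ x) (φ y)) :
    EquicontinuousOn f s := by
  rw [← equicontinuous_restrict_iff]
  intro x
  refine Metric.equicontinuousAt_of_continuity_modulus (fun y : s => dist (φ x) (φ y)) ?_ _
    (Eventually.of_forall fun y i => hf i x x.2 y y.2)
  have hdist : Continuous fun y : s => dist (φ x) (φ y) := continuous_const.dist hφ.domRestrict
  simpa only [dist_self] using hdist.tendsto x

theorem equicontinuousOn_of_norm_deriv_le {ι E : Type*} [NormedAddCommGroup E] [NormedSpace ℝ E]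
    {f : ι → ℝ → E} {b : ℝ → ℝ} {s : Set ℝ} (hs : IsOpen s)
    (hf : ∀ i, ∀ x ∈ s, DifferentiableAt ℝ (f i) x) (hb : ContinuousOn b s)
    (hfb : ∀ i, ∀ x ∈ s, ‖deriv (f i) x‖ ≤ b x) : EquicontinuousOn f s := by
  intro x hx
  have hnear : ∀ᶠ y in 𝓝 x, y ∈ s ∧ b y < b x + 1 :=
    (hs.eventually_mem hx).and
      ((hb.continuousAt (hs.mem_nhds hx)).eventually_lt_const (lt_add_one _))
  obtain ⟨δ, hδ, hball⟩ := Metric.eventually_nhds_iff_ball.1 hnear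
  refine (Metric.equicontinuousAt_of_continuity_modulus (fun y => (b x + 1) * ‖x - y‖) ?_ f
    ?_).equicontinuousWithinAt s
  · have hmod : Continuous fun y => (b x + 1) * ‖x - y‖ := by fun_prop
    simpa using hmod.tendsto x
  · filter_upwards [Metric.ball_mem_nhds x hδ] with y hy i
    rw [dist_eq_norm]
    exact (convex_ball x δ).norm_image_sub_le_of_norm_deriv_le
      (fun z hz => hf i z (hball z hz).1)
      (fun z hz => (hfb i z (hball z hz).1).trans (hball z hz).2.le) hy
      (Metric.mem_ball_self hδ)

end RealAnalysis

section RadialElliptic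

/-- A positively homogeneous, uniformly elliptic operator acting on the Hessian eigenvalues of a
radial function: `a = u''` is the simple radial one and `b = u' / r` the `n`-fold tangential one.
The multiplicity `n` is allowed to be any nonnegative real. -/
structure IsRadialElliptic (G : ℝ → ℝ → ℝ) (lam Lam n : ℝ) : Prop where
  lam_pos : 0 < lam
  n_nonneg : 0 ≤ n
  elliptic : ∀ a b s t, 0 ≤ s → 0 ≤ t → lam * (s + n * t) ≤ G (a + s) (b + t) - G a b ∧
    G (a + s) (b + t) - G a b ≤ Lam * (s + n * t)
  map_mul : ∀ t a b, 0 < t → G (t * a) (t * b) = t * G a b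

namespace IsRadialElliptic

variable {G : ℝ → ℝ → ℝ} {lam Lam n a a' b b' : ℝ} (hG : IsRadialElliptic G lam Lam n)
include hG

theorem map_zero : G 0 0 = 0 := by
  have h := hG.map_mul 2 0 0 two_pos
  rw [mul_zero] at h
  linarith

theorem lam_le_Lam : lam ≤ Lam := by
  obtain ⟨hlower, hupper⟩ := hG.elliptic 0 0 1 0 zero_le_one le_rfl
  linarith

theorem Lam_pos : 0 < Lam := hG.lam_pos.trans_le hG.lam_le_Lam

theorem sub_left_bounds (b : ℝ) (ha : a ≤ a') :
    lam * (a' - a) ≤ G a' b - G a b ∧ G a' b - G a b ≤ Lam * (a' - a) := by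
  simpa using hG.elliptic a b (a' - a) 0 (sub_nonneg.2 ha) le_rfl

theorem sub_right_bounds (a : ℝ) (hb : b ≤ b') :
    lam * (n * (b' - b)) ≤ G a b' - G a b ∧ G a b' - G a b ≤ Lam * (n * (b' - b)) := by
  simpa using hG.elliptic a b 0 (b' - b) le_rfl (sub_nonneg.2 hb)

theorem mul_sub_le_sub_of_le (hb : b ≤ b') (h : G a' b' ≤ G a b) :
    lam / Lam * n * (b' - b) ≤ a - a' := by
  have hright := (hG.sub_right_bounds a' hb).1
  have hn : 0 ≤ n * (b' - b) := mul_nonneg hG.n_nonneg (sub_nonneg.2 hb)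
  rcases le_total a a' with ha | ha
  · have hleft := (hG.sub_left_bounds b ha).1
    have hsum : lam * (n * (b' - b)) ≤ lam * (a - a') := by linarith
    calc lam / Lam * n * (b' - b) = lam / Lam * (n * (b' - b)) := mul_assoc _ _ _
      _ ≤ n * (b' - b) := mul_le_of_le_one_left hn ((div_le_one hG.Lam_pos).2 hG.lam_le_Lam)
      _ ≤ a - a' := le_of_mul_le_mul_left hsum hG.lam_pos
  · have hleft := (hG.sub_left_bounds b ha).2
    calc lam / Lam * n * (b' - b) = lam * (n * (b' - b)) / Lam := by ring
      _ ≤ a - a' := (div_le_iff₀' hG.Lam_pos).2 (by linarith)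

theorem sub_le_mul_sub_of_le (hb : b ≤ b') (h : G a b ≤ G a' b') :
    a - a' ≤ Lam / lam * n * (b' - b) := by
  have hn : 0 ≤ n * (b' - b) := mul_nonneg hG.n_nonneg (sub_nonneg.2 hb)
  have hrw : Lam / lam * n * (b' - b) = Lam * (n * (b' - b)) / lam := by ring
  rw [hrw]
  rcases le_total a a' with ha | ha
  · exact (sub_nonpos.2 ha).trans (div_nonneg (mul_nonneg hG.Lam_pos.le hn) hG.lam_pos.le)
  · rw [le_div_iff₀' hG.lam_pos]
    linarith [(hG.sub_left_bounds b ha).1, (hG.sub_right_bounds a' hb).2]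

theorem abs_sub_left_bounds (a a' b : ℝ) :
    lam * |a - a'| ≤ |G a b - G a' b| ∧ |G a b - G a' b| ≤ Lam * |a - a'| := by
  wlog ha : a ≤ a' generalizing a a'
  · rw [abs_sub_comm a, abs_sub_comm (G a b)]
    exact this a' a (le_of_not_ge ha)
  have h := hG.sub_left_bounds b ha
  have hlam : 0 ≤ lam * (a' - a) := mul_nonneg hG.lam_pos.le (sub_nonneg.2 ha)
  rwa [abs_sub_comm a, abs_sub_comm (G a b), abs_of_nonneg (sub_nonneg.2 ha),
    abs_of_nonneg (hlam.trans h.1)]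

theorem abs_sub_right_le (a b b' : ℝ) : |G a b - G a b'| ≤ Lam * (n * |b - b'|) := by
  wlog hb : b ≤ b' generalizing b b'
  · rw [abs_sub_comm b, abs_sub_comm (G a b)]
    exact this b' b (le_of_not_ge hb)
  have h := hG.sub_right_bounds a hb
  have hlam : 0 ≤ lam * (n * (b' - b)) :=
    mul_nonneg hG.lam_pos.le (mul_nonneg hG.n_nonneg (sub_nonneg.2 hb))
  rw [abs_sub_comm b, abs_sub_comm (G a b), abs_of_nonneg (sub_nonneg.2 hb),
    abs_of_nonneg (hlam.trans h.1)]
  exact h.2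

theorem abs_sub_le (a a' b b' : ℝ) :
    |a - a'| ≤ (|G a b - G a' b'| + Lam * (n * |b - b'|)) / lam := by
  rw [le_div_iff₀' hG.lam_pos]
  calc lam * |a - a'| ≤ |G a b - G a' b| := (hG.abs_sub_left_bounds a a' b).1
    _ ≤ |G a b - G a' b'| + |G a' b' - G a' b| := _root_.abs_sub_le _ _ _
    _ ≤ |G a b - G a' b'| + Lam * (n * |b - b'|) := by
      rw [abs_sub_comm b]
      exact add_le_add_right (hG.abs_sub_right_le a' b' b) _

theorem map_one_sub_neg_one_neg (hk : 1 ≤ lam / Lam * n) {p : ℝ} (hp : 0 < p) :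
    G (1 - p) (-1) < 0 := by
  by_contra! h
  have hle := hG.mul_sub_le_sub_of_le (neg_nonpos.2 zero_le_one) (hG.map_zero.trans_le h)
  linarith

theorem surjective_left (b : ℝ) : Function.Surjective fun a => G a b := by
  have hlip : LipschitzWith Lam.toNNReal fun a => G a b :=
    LipschitzWith.of_dist_le_mul fun x y => by
      rw [coe_toNNReal _ hG.Lam_pos.le]
      exact (hG.abs_sub_left_bounds x y b).2
  intro c
  set t := |c - G 0 b| / lam
  have ht : 0 ≤ t := div_nonneg (abs_nonneg _) hG.lam_pos.le
  have hlt : lam * t = |c - G 0 b| := mul_div_cancel₀ _ hG.lam_pos.ne'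
  refine mem_range_of_exists_le_of_exists_ge hlip.continuous ⟨-t, ?_⟩ ⟨t, ?_⟩
  · have h := (hG.sub_left_bounds b (neg_nonpos.2 ht)).1
    linarith [neg_abs_le (c - G 0 b)]
  · have h := (hG.sub_left_bounds b ht).1
    linarith [le_abs_self (c - G 0 b)]

theorem exists_continuous_solve_left :
    ∃ I : ℝ × ℝ → ℝ, Continuous I ∧ ∀ a b c, G a b = c ↔ a = I (b, c) := by
  choose I hI using hG.surjective_left
  refine ⟨fun x => I x.1 x.2, continuous_iff_continuousAt.2 fun ⟨b, c⟩ => ?_, fun a b c => ?_⟩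
  · refine tendsto_iff_dist_tendsto_zero.2 (squeeze_zero
      (g := fun x : ℝ × ℝ => (|x.2 - c| + Lam * (n * |x.1 - b|)) / lam)
      (fun _ => dist_nonneg) (fun ⟨b', c'⟩ => ?_) ?_)
    · simpa only [hI, dist_eq] using hG.abs_sub_le (I b' c') (I b c) b' b
    · have hmod : Continuous fun x : ℝ × ℝ => (|x.2 - c| + Lam * (n * |x.1 - b|)) / lam := by
        fun_prop
      simpa using hmod.tendsto (b, c)
  · refine ⟨fun h => ?_, fun h => h ▸ hI b c⟩
    have hle := hG.abs_sub_le a (I b c) b b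
    simp only [h, hI, sub_self, abs_zero, mul_zero, add_zero, zero_div] at hle
    exact sub_eq_zero.1 (abs_nonpos_iff.1 hle)

end IsRadialElliptic

/-- The operator `G(a, b) = F(D(a, b))` induced by `F` on the Hessian eigenvalues `a` and `b` of a
radial function. -/
def radialReduction (N : ℕ) (F : Matrix (Fin N) (Fin N) ℝ → ℝ) (a b : ℝ) : ℝ :=
  F (Dmat N a b)

section Dmat

variable {N : ℕ} {a b : ℝ}

theorem Dmat_add_Dmat (a b a' b' : ℝ) : Dmat N a b + Dmat N a' b' = Dmat N (a + a') (b + b') := by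
  simp only [Dmat, diagonal_add, ite_add_ite]

theorem smul_Dmat (t a b : ℝ) : t • Dmat N a b = Dmat N (t * a) (t * b) := by
  ext i j
  by_cases hij : i = j <;> simp [Dmat, hij, mul_ite]

theorem posSemidef_Dmat (ha : 0 ≤ a) (hb : 0 ≤ b) : (Dmat N a b).PosSemidef :=
  PosSemidef.diagonal fun i => by
    change 0 ≤ if (i : ℕ) = 0 then a else b
    split_ifs <;> assumption

theorem trace_Dmat (hN : N ≠ 0) (a b : ℝ) : (Dmat N a b).trace = a + ((N : ℝ) - 1) * b := by
  obtain ⟨m, rfl⟩ := Nat.exists_eq_succ_of_ne_zero hN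
  rw [Dmat, trace_diagonal, Fin.sum_univ_succ]
  simp

end Dmat

theorem isRadialElliptic_radialReduction {N : ℕ} (hN : N ≠ 0) {lam Lam : ℝ} (hlam : 0 < lam)
    {F : Matrix (Fin N) (Fin N) ℝ → ℝ} (hF : UnifElliptic N lam Lam F) (hF' : PosHomog N F) :
    IsRadialElliptic (radialReduction N F) lam Lam ((N : ℝ) - 1) where
  lam_pos := hlam
  n_nonneg := sub_nonneg.2 (by exact_mod_cast Nat.one_le_iff_ne_zero.2 hN)
  elliptic a b s t hs ht := by
    have h := hF (Dmat N a b) (Dmat N s t) (isSymm_diagonal _) (posSemidef_Dmat hs ht)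
    rwa [Dmat_add_Dmat, trace_Dmat hN] at h
  map_mul t a b ht := by
    rw [radialReduction, ← smul_Dmat]
    exact hF' t ht _

end RadialElliptic

section RadialOp

/-- The operator `G(u'', u' / r)` evaluated on the radial function with profile `u`. -/
def radialOp (G : ℝ → ℝ → ℝ) (u : ℝ → ℝ) (r : ℝ) : ℝ :=
  G (deriv (deriv u) r) (deriv u r / r)

variable {G : ℝ → ℝ → ℝ} {lam Lam n : ℝ} {u v : ℝ → ℝ} {R r : ℝ}

theorem radialOp_const_mul (hG : IsRadialElliptic G lam Lam n) {t : ℝ} (ht : 0 < t)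
    (u : ℝ → ℝ) (r : ℝ) : radialOp G (fun x => t * u x) r = t * radialOp G u r := by
  have hderiv : deriv (fun x => t * u x) = fun x => t * deriv u x :=
    funext fun x => deriv_const_mul_field t
  rw [radialOp, hderiv, deriv_const_mul_field, mul_div_assoc, hG.map_mul t _ _ ht, radialOp]

theorem radialOp_comp_mul (hG : IsRadialElliptic G lam Lam n) {ρ : ℝ} (hρ : 0 < ρ)
    (u : ℝ → ℝ) (r : ℝ) :
    radialOp G (fun x => u (ρ * x)) r = ρ ^ 2 * radialOp G u (ρ * r) := by
  have hderiv : deriv (fun x => u (ρ * x)) = fun x => ρ * deriv u (ρ * x) :=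
    funext fun x => deriv_comp_mul_left ρ u x
  have hdiv : ρ * deriv u (ρ * r) / r = ρ ^ 2 * (deriv u (ρ * r) / (ρ * r)) := by
    rw [← mul_div_mul_left (ρ * deriv u (ρ * r)) r hρ.ne']
    ring
  rw [radialOp, hderiv, deriv_const_mul_field, deriv_comp_mul_left, smul_eq_mul, ← mul_assoc,
    ← sq, hdiv, hG.map_mul _ _ _ (pow_pos hρ 2), radialOp]

theorem deriv_le_deriv_of_radialOp_le (hG : IsRadialElliptic G lam Lam n)
    (hk : 1 ≤ lam / Lam * n) (hu : ContDiffOn ℝ 2 u (Ioo 0 R)) (hv : ContDiffOn ℝ 2 v (Ioo 0 R))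
    (hop : ∀ r ∈ Ioo 0 R, radialOp G v r ≤ radialOp G u r)
    (hB : BddAbove ((fun r => u r - v r) '' Ioo 0 R)) (hr : r ∈ Ioo 0 R) :
    deriv v r ≤ deriv u r := by
  refine sub_nonneg.1 (deriv_nonneg_of_bddAbove_of_flux
    (w' := fun r => deriv u r - deriv v r) (w'' := fun r => deriv (deriv u) r - deriv (deriv v) r)
    (fun r hr => (hasDerivAt_of_contDiffOn_two isOpen_Ioo hu hr).sub
      (hasDerivAt_of_contDiffOn_two isOpen_Ioo hv hr))
    (fun r hr => (hasDerivAt_deriv_of_contDiffOn_two isOpen_Ioo hu hr).sub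
      (hasDerivAt_deriv_of_contDiffOn_two isOpen_Ioo hv hr)) hB (fun r hr hneg => ?_) hr)
  have hlt : deriv u r < deriv v r := sub_neg.1 hneg
  have hdiv : deriv u r / r ≤ deriv v r / r := (div_le_div_iff_of_pos_right hr.1).2 hlt.le
  have hsub : deriv v r / r - deriv u r / r ≤ deriv (deriv u) r - deriv (deriv v) r :=
    (le_mul_of_one_le_left (sub_nonneg.2 hdiv) hk).trans
      (hG.mul_sub_le_sub_of_le hdiv (hop r hr))
  rw [← sub_div, div_le_iff₀' hr.1] at hsub
  linarith

theorem monotoneOn_sub_of_radialOp_le (hG : IsRadialElliptic G lam Lam n)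
    (hk : 1 ≤ lam / Lam * n) (hu : ContDiffOn ℝ 2 u (Ioo 0 R)) (hv : ContDiffOn ℝ 2 v (Ioo 0 R))
    (hop : ∀ r ∈ Ioo 0 R, radialOp G v r ≤ radialOp G u r)
    (hB : BddAbove ((fun r => u r - v r) '' Ioo 0 R)) {D : Set ℝ} (hD : Convex ℝ D)
    (hDR : interior D = Ioo 0 R) (huD : ContinuousOn u D) (hvD : ContinuousOn v D) :
    MonotoneOn (fun r => u r - v r) D := by
  refine monotoneOn_of_hasDerivWithinAt_nonneg (f' := fun r => deriv u r - deriv v r) hD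
    (huD.sub hvD) ?_ ?_ <;> rw [hDR]
  · exact fun r hr => ((hasDerivAt_of_contDiffOn_two isOpen_Ioo hu hr).sub
      (hasDerivAt_of_contDiffOn_two isOpen_Ioo hv hr)).hasDerivWithinAt
  · exact fun r hr => sub_nonneg.2 (deriv_le_deriv_of_radialOp_le hG hk hu hv hop hB hr)

theorem radialOp_zero (hG : IsRadialElliptic G lam Lam n) (r : ℝ) :
    radialOp G (fun _ => 0) r = 0 := by
  simp only [radialOp, deriv_const', deriv_const, zero_div, hG.map_zero]

theorem bddAbove_image_zero_sub (hv0 : ∀ r ∈ Ioo 0 R, 0 ≤ v r) :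
    BddAbove ((fun r => 0 - v r) '' Ioo 0 R) :=
  ⟨0, forall_mem_image.2 fun r hr => sub_nonpos.2 (hv0 r hr)⟩

theorem deriv_nonpos_of_radialOp_nonpos (hG : IsRadialElliptic G lam Lam n)
    (hk : 1 ≤ lam / Lam * n) (hv : ContDiffOn ℝ 2 v (Ioo 0 R))
    (hop : ∀ r ∈ Ioo 0 R, radialOp G v r ≤ 0) (hv0 : ∀ r ∈ Ioo 0 R, 0 ≤ v r)
    (hr : r ∈ Ioo 0 R) : deriv v r ≤ 0 := by
  simpa using deriv_le_deriv_of_radialOp_le hG hk contDiffOn_const hv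
    (fun r hr => (hop r hr).trans_eq (radialOp_zero hG r).symm) (bddAbove_image_zero_sub hv0) hr

theorem antitoneOn_of_radialOp_nonpos (hG : IsRadialElliptic G lam Lam n)
    (hk : 1 ≤ lam / Lam * n) (hv : ContDiffOn ℝ 2 v (Ioo 0 R))
    (hop : ∀ r ∈ Ioo 0 R, radialOp G v r ≤ 0) (hv0 : ∀ r ∈ Ioo 0 R, 0 ≤ v r) {D : Set ℝ}
    (hD : Convex ℝ D) (hDR : interior D = Ioo 0 R) (hvD : ContinuousOn v D) :
    AntitoneOn v D := by
  simpa using (monotoneOn_sub_of_radialOp_le hG hk contDiffOn_const hv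
    (fun r hr => (hop r hr).trans_eq (radialOp_zero hG r).symm) (bddAbove_image_zero_sub hv0)
    hD hDR continuousOn_const hvD).neg

theorem antitoneOn_rpow_mul_deriv (hG : IsRadialElliptic G lam Lam n)
    (hk : 1 ≤ lam / Lam * n) (hv : ContDiffOn ℝ 2 v (Ioo 0 R))
    (hop : ∀ r ∈ Ioo 0 R, radialOp G v r ≤ 0) (hv0 : ∀ r ∈ Ioo 0 R, 0 ≤ v r) :
    AntitoneOn (fun r => r ^ (Lam / lam * n) * deriv v r) (Ioo 0 R) := by
  set K := Lam / lam * n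
  have hderiv : ∀ r ∈ Ioo 0 R, HasDerivAt (fun r => r ^ K * deriv v r)
      (r ^ K * (deriv (deriv v) r + K * (deriv v r / r))) r :=
    fun r hr => hasDerivAt_rpow_mul K hr.1 (hasDerivAt_deriv_of_contDiffOn_two isOpen_Ioo hv hr)
  refine antitoneOn_of_hasDerivWithinAt_nonpos (convex_Ioo 0 R)
    (f' := fun r => r ^ K * (deriv (deriv v) r + K * (deriv v r / r)))
    (fun r hr => (hderiv r hr).continuousAt.continuousWithinAt) ?_ ?_ <;> rw [interior_Ioo]
  · exact fun r hr => (hderiv r hr).hasDerivWithinAt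
  · intro r hr
    have hdiv : deriv v r / r ≤ 0 :=
      div_nonpos_of_nonpos_of_nonneg (deriv_nonpos_of_radialOp_nonpos hG hk hv hop hv0 hr) hr.1.le
    have hle := hG.sub_le_mul_sub_of_le (a' := 0) hdiv ((hop r hr).trans_eq hG.map_zero.symm)
    exact mul_nonpos_of_nonneg_of_nonpos (rpow_nonneg hr.1.le K) (by linarith)

theorem pos_of_radialOp_nonpos (hG : IsRadialElliptic G lam Lam n)
    (hk : 1 ≤ lam / Lam * n) (hv : ContDiffOn ℝ 2 v (Ioo 0 R)) (hvc : ContinuousOn v (Ico 0 R))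
    (hop : ∀ r ∈ Ioo 0 R, radialOp G v r ≤ 0) (hv0 : ∀ r ∈ Ioo 0 R, 0 ≤ v r) (h0 : 0 < v 0)
    (hr : r ∈ Ico 0 R) : 0 < v r := by
  by_contra! hle
  have hr0 : 0 < r := hr.1.lt_of_ne fun h => hle.not_gt (h ▸ h0)
  have hanti := antitoneOn_of_radialOp_nonpos hG hk hv hop hv0 (convex_Ico 0 R) interior_Ico hvc
  have hvanish : ∀ x ∈ Ioo r R, v x = 0 := fun x hx =>
    ((hanti hr ⟨hr.1.trans hx.1.le, hx.2⟩ hx.1.le).trans hle).antisymm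
      (hv0 x ⟨hr0.trans hx.1, hx.2⟩)
  obtain ⟨s, hs⟩ := nonempty_Ioo.2 hr.2
  have hs0 : 0 < s := hr0.trans hs.1
  have hderiv_s : deriv v s = 0 := by
    have heq : v =ᶠ[nhds s] fun _ => 0 := by
      filter_upwards [isOpen_Ioo.mem_nhds hs] using hvanish
    rw [heq.deriv_eq, deriv_const]
  have hderiv : ∀ x ∈ Ioo 0 s, 0 ≤ deriv v x := fun x hx => by
    have hflux := antitoneOn_rpow_mul_deriv hG hk hv hop hv0 ⟨hx.1, hx.2.trans hs.2⟩
      ⟨hs0, hs.2⟩ hx.2.le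
    simp only [hderiv_s, mul_zero] at hflux
    exact nonneg_of_mul_nonneg_right hflux (rpow_pos_of_pos hx.1 _)
  have hmono : MonotoneOn v (Icc 0 s) := by
    refine monotoneOn_of_hasDerivWithinAt_nonneg (f' := deriv v) (convex_Icc 0 s)
      (hvc.mono (Icc_subset_Ico_right hs.2)) ?_ ?_ <;> rw [interior_Icc]
    · exact fun x hx => (hasDerivAt_of_contDiffOn_two isOpen_Ioo hv
        ⟨hx.1, hx.2.trans hs.2⟩).hasDerivWithinAt
    · exact hderiv
  exact h0.not_ge ((hmono (left_mem_Icc.2 hs0.le) (right_mem_Icc.2 hs0.le) hs0.le).trans_eq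
    (hvanish s hs))

theorem radialOp_neg_rpow (hG : IsRadialElliptic G lam Lam n) {p : ℝ} (hp : 0 < p)
    (hr : 0 < r) :
    radialOp G (fun x => -x ^ p) r = p * G (1 - p) (-1) * r ^ (p - 2) := by
  have hderiv : ∀ x : ℝ, 0 < x → deriv (fun y : ℝ => -y ^ p) x = -(p * x ^ (p - 1)) :=
    fun x hx => (hasDerivAt_rpow_const (Or.inl hx.ne')).neg.deriv
  have hderiv2 : deriv (deriv fun y : ℝ => -y ^ p) r = p * r ^ (p - 2) * (1 - p) := by
    have heq : deriv (fun y : ℝ => -y ^ p) =ᶠ[nhds r] fun x => -(p * x ^ (p - 1)) := by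
      filter_upwards [lt_mem_nhds hr] using hderiv
    have hpow := (hasDerivAt_rpow_const (x := r) (p := p - 1) (Or.inl hr.ne')).const_mul p
    rw [show p - 1 - 1 = p - 2 by ring] at hpow
    exact heq.deriv_eq.trans (hpow.neg.deriv.trans (by ring))
  have hdiv : deriv (fun y : ℝ => -y ^ p) r / r = p * r ^ (p - 2) * -1 := by
    rw [hderiv r hr, show p - 1 = p - 2 + 1 by ring, rpow_add_one hr.ne']
    field_simp
  rw [radialOp, hderiv2, hdiv, hG.map_mul _ _ _ (mul_pos hp (rpow_pos_of_pos hr _))]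
  ring

end RadialOp

section Solutions

variable {G : ℝ → ℝ → ℝ} {lam Lam n : ℝ} {V V' u v : ℝ → ℝ}

/-- `v` is the profile of a positive radial supersolution of `G(v'', v' / r) + V v = 0` in the
punctured unit ball. No behaviour at the origin or at the boundary is prescribed. -/
structure IsSupersolution (G : ℝ → ℝ → ℝ) (V v : ℝ → ℝ) : Prop where
  contDiffOn : ContDiffOn ℝ 2 v (Ioo 0 1)
  pos : ∀ r ∈ Ioo (0 : ℝ) 1, 0 < v r
  radialOp_le : ∀ r ∈ Ioo (0 : ℝ) 1, radialOp G v r ≤ -(V r * v r)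

/-- `u` is the profile of a positive radial solution of `G(u'', u' / r) + V u = 0` in the punctured
unit ball which is continuous on the closed ball, vanishes on the boundary and is normalized by
`u(0) = 1`: an eigenfunction when `V` is an eigenvalue times a weight. -/
structure IsDirichletSolution (G : ℝ → ℝ → ℝ) (V u : ℝ → ℝ) : Prop where
  continuousOn : ContinuousOn u (Icc 0 1)
  contDiffOn : ContDiffOn ℝ 2 u (Ioo 0 1)
  map_zero : u 0 = 1
  map_one : u 1 = 0
  pos : ∀ r ∈ Ico (0 : ℝ) 1, 0 < u r
  radialOp_eq : ∀ r ∈ Ioo (0 : ℝ) 1, radialOp G u r = -(V r * u r)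

theorem IsSupersolution.weight_mono (hv : IsSupersolution G V v)
    (hV : ∀ r ∈ Ioo (0 : ℝ) 1, V' r ≤ V r) : IsSupersolution G V' v where
  contDiffOn := hv.contDiffOn
  pos := hv.pos
  radialOp_le r hr := (hv.radialOp_le r hr).trans
    (neg_le_neg (mul_le_mul_of_nonneg_right (hV r hr) (hv.pos r hr).le))

theorem IsSupersolution.comp_mul (hG : IsRadialElliptic G lam Lam n) (hv : IsSupersolution G V v)
    {ρ : ℝ} (hρ : ρ ∈ Ioc (0 : ℝ) 1) :
    IsSupersolution G (fun r => ρ ^ 2 * V (ρ * r)) (fun r => v (ρ * r)) := by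
  have hmem : MapsTo (fun r => ρ * r) (Ioo 0 1) (Ioo 0 1) := fun r hr =>
    ⟨mul_pos hρ.1 hr.1, mul_lt_one_of_nonneg_of_lt_one_right hρ.2 hr.1.le hr.2⟩
  refine ⟨hv.contDiffOn.comp (by fun_prop) hmem, fun r hr => hv.pos _ (hmem hr), fun r hr => ?_⟩
  calc radialOp G (fun x => v (ρ * x)) r = ρ ^ 2 * radialOp G v (ρ * r) :=
        radialOp_comp_mul hG hρ.1 v r
    _ ≤ ρ ^ 2 * -(V (ρ * r) * v (ρ * r)) :=
        mul_le_mul_of_nonneg_left (hv.radialOp_le _ (hmem hr)) (sq_nonneg ρ)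
    _ = -(ρ ^ 2 * V (ρ * r) * v (ρ * r)) := by ring

theorem IsDirichletSolution.isSupersolution (hu : IsDirichletSolution G V u) :
    IsSupersolution G V u where
  contDiffOn := hu.contDiffOn
  pos r hr := hu.pos r (Ioo_subset_Ico_self hr)
  radialOp_le r hr := (hu.radialOp_eq r hr).le

theorem IsSupersolution.radialOp_nonpos (hv : IsSupersolution G V v)
    (hV : ∀ r ∈ Ioo (0 : ℝ) 1, 0 ≤ V r) {r : ℝ} (hr : r ∈ Ioo (0 : ℝ) 1) : radialOp G v r ≤ 0 :=
  (hv.radialOp_le r hr).trans (neg_nonpos.2 (mul_nonneg (hV r hr) (hv.pos r hr).le))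

theorem IsSupersolution.antitoneOn (hG : IsRadialElliptic G lam Lam n) (hk : 1 ≤ lam / Lam * n)
    (hv : IsSupersolution G V v) (hV : ∀ r ∈ Ioo (0 : ℝ) 1, 0 ≤ V r) {D : Set ℝ}
    (hD : Convex ℝ D) (hD1 : interior D = Ioo 0 1) (hvD : ContinuousOn v D) : AntitoneOn v D :=
  antitoneOn_of_radialOp_nonpos hG hk hv.contDiffOn (fun _ => hv.radialOp_nonpos hV)
    (fun r hr => (hv.pos r hr).le) hD hD1 hvD

namespace IsDirichletSolution

theorem mem_Icc (hG : IsRadialElliptic G lam Lam n) (hk : 1 ≤ lam / Lam * n)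
    (hu : IsDirichletSolution G V u) (hV : ∀ r ∈ Ioo (0 : ℝ) 1, 0 ≤ V r) {r : ℝ}
    (hr : r ∈ Icc (0 : ℝ) 1) : u r ∈ Icc (0 : ℝ) 1 := by
  have hanti := hu.isSupersolution.antitoneOn hG hk hV (convex_Icc 0 1) interior_Icc
    hu.continuousOn
  exact ⟨hu.map_one ▸ hanti hr (right_mem_Icc.2 zero_le_one) hr.2,
    hu.map_zero ▸ hanti (left_mem_Icc.2 zero_le_one) hr hr.1⟩

theorem le_mul_sub_of_le_mul (hG : IsRadialElliptic G lam Lam n) (hk : 1 ≤ lam / Lam * n)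
    (hu : IsDirichletSolution G V u) (hv : IsSupersolution G V v)
    (hV : ∀ r ∈ Ioo (0 : ℝ) 1, 0 ≤ V r) (hvc : ContinuousOn v (Ioc 0 1)) {T : ℝ} (hT : 0 < T)
    (hle : ∀ r ∈ Ioo (0 : ℝ) 1, u r ≤ T * v r) {r : ℝ} (hr : r ∈ Ioo (0 : ℝ) 1) :
    u r ≤ T * (v r - v 1) := by
  have hop : ∀ r ∈ Ioo (0 : ℝ) 1, radialOp G (fun x => T * v x) r ≤ radialOp G u r := by
    intro r hr
    calc radialOp G (fun x => T * v x) r = T * radialOp G v r := radialOp_const_mul hG hT v r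
      _ ≤ T * -(V r * v r) := mul_le_mul_of_nonneg_left (hv.radialOp_le r hr) hT.le
      _ = -(V r * (T * v r)) := by ring
      _ ≤ -(V r * u r) := neg_le_neg (mul_le_mul_of_nonneg_left (hle r hr) (hV r hr))
      _ = radialOp G u r := (hu.radialOp_eq r hr).symm
  have hbdd : BddAbove ((fun r => u r - T * v r) '' Ioo 0 1) :=
    ⟨0, forall_mem_image.2 fun r hr => sub_nonpos.2 (hle r hr)⟩
  have hmono := monotoneOn_sub_of_radialOp_le hG hk hu.contDiffOn
    (contDiffOn_const.mul hv.contDiffOn) hop hbdd (convex_Ioc 0 1) interior_Ioc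
    (hu.continuousOn.mono Ioc_subset_Icc_self) (continuousOn_const.mul hvc)
    (Ioo_subset_Ioc_self hr) (right_mem_Ioc.2 one_pos) hr.2.le
  simp only [hu.map_one] at hmono
  linarith

/- If `T` is the least constant with `u ≤ T v`, the previous lemma gives `u ≤ T (v - v 1)`, and as
`u ≤ 1` this means `(1 + T v 1) u ≤ T v`, contradicting the choice of `T`. -/
theorem not_isSupersolution (hG : IsRadialElliptic G lam Lam n) (hk : 1 ≤ lam / Lam * n)
    (hu : IsDirichletSolution G V u) (hV : ∀ r ∈ Ioo (0 : ℝ) 1, 0 ≤ V r)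
    (hvc : ContinuousOn v (Ioc 0 1)) (hv1 : 0 < v 1) : ¬ IsSupersolution G V v := by
  intro hv
  have hu1 : ∀ r ∈ Ioo (0 : ℝ) 1, u r ≤ 1 :=
    fun r hr => (hu.mem_Icc hG hk hV (Ioo_subset_Icc_self hr)).2
  have hv_ge : ∀ r ∈ Ioo (0 : ℝ) 1, v 1 ≤ v r := fun r hr =>
    hv.antitoneOn hG hk hV (convex_Ioc 0 1) interior_Ioc hvc (Ioo_subset_Ioc_self hr)
      (right_mem_Ioc.2 one_pos) hr.2.le
  have hbdd : BddAbove ((fun r => u r / v r) '' Ioo 0 1) :=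
    ⟨1 / v 1, forall_mem_image.2 fun r hr => div_le_div₀ zero_le_one (hu1 r hr) hv1 (hv_ge r hr)⟩
  have hne : ((fun r => u r / v r) '' Ioo 0 1).Nonempty := (nonempty_Ioo.2 one_pos).image _
  set T := sSup ((fun r => u r / v r) '' Ioo 0 1)
  have hT_ge : ∀ r ∈ Ioo (0 : ℝ) 1, u r / v r ≤ T := fun r hr => le_csSup hbdd ⟨r, hr, rfl⟩
  have hT : 0 < T := by
    obtain ⟨r, hr⟩ := nonempty_Ioo.2 (one_pos (α := ℝ))
    exact (div_pos (hu.pos r (Ioo_subset_Ico_self hr)) (hv.pos r hr)).trans_le (hT_ge r hr)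
  have hTv : 0 < T * v 1 := mul_pos hT hv1
  have hT_le : T ≤ T / (1 + T * v 1) := csSup_le hne <| forall_mem_image.2 fun r hr => by
    have hle : u r ≤ T * (v r - v 1) := hu.le_mul_sub_of_le_mul hG hk hv hV hvc hT
      (fun r hr => (div_le_iff₀ (hv.pos r hr)).1 (hT_ge r hr)) hr
    rw [div_le_div_iff₀ (hv.pos r hr) (by linarith)]
    linarith [mul_le_of_le_one_left hTv.le (hu1 r hr)]
  exact hT_le.not_gt (div_lt_self hT (by linarith))

theorem nonneg (hG : IsRadialElliptic G lam Lam n) (hk : 1 ≤ lam / Lam * n) {W : ℝ → ℝ} {μ : ℝ}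
    (hu : IsDirichletSolution G (fun r => μ * W r) u) (hW : ∀ r ∈ Ioo (0 : ℝ) 1, 0 ≤ W r) :
    0 ≤ μ := by
  by_contra! hμ
  have hop : ∀ r ∈ Ioo (0 : ℝ) 1, radialOp G (fun _ => 0) r ≤ radialOp G u r := fun r hr => by
    rw [radialOp_zero hG, hu.radialOp_eq r hr, neg_nonneg]
    exact mul_nonpos_of_nonpos_of_nonneg (mul_nonpos_of_nonpos_of_nonneg hμ.le (hW r hr))
      (hu.pos r (Ioo_subset_Ico_self hr)).le
  have hbdd : BddAbove ((fun r => u r - 0) '' Ioo 0 1) :=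
    (isCompact_Icc.bddAbove_image (hu.continuousOn.sub continuousOn_const)).mono
      (image_mono Ioo_subset_Icc_self)
  have hmono := monotoneOn_sub_of_radialOp_le hG hk hu.contDiffOn contDiffOn_const hop hbdd
    (convex_Icc 0 1) interior_Icc hu.continuousOn continuousOn_const
    (left_mem_Icc.2 zero_le_one) (right_mem_Icc.2 zero_le_one) zero_le_one
  simp only [hu.map_zero, hu.map_one] at hmono
  linarith

theorem le_of_isSupersolution (hG : IsRadialElliptic G lam Lam n) (hk : 1 ≤ lam / Lam * n)
    {W₁ W₂ : ℝ → ℝ} {μ₁ μ₂ : ℝ} (hu : IsDirichletSolution G (fun r => μ₁ * W₁ r) u)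
    (hv : IsSupersolution G (fun r => μ₂ * W₂ r) v)
    (hW₁ : ∀ r ∈ Ioo (0 : ℝ) 1, 0 ≤ W₁ r)
    (hW : ∀ r ∈ Ioo (0 : ℝ) 1, ∀ s ∈ Ioc 0 r, W₁ r ≤ W₂ s) : μ₂ ≤ μ₁ := by
  by_contra! hlt
  have hμ₁ : 0 ≤ μ₁ := hu.nonneg hG hk hW₁
  have hμ₂ : 0 < μ₂ := hμ₁.trans_lt hlt
  obtain ⟨ρ, hρ0, hρ1, hρμ⟩ : ∃ ρ : ℝ, 0 < ρ ∧ ρ < 1 ∧ μ₁ ≤ ρ ^ 2 * μ₂ := by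
    have hq0 : 0 ≤ μ₁ / μ₂ := div_nonneg hμ₁ hμ₂.le
    have hq1 : μ₁ / μ₂ < 1 := (div_lt_one hμ₂).2 hlt
    refine ⟨(1 + μ₁ / μ₂) / 2, by linarith, by linarith, (div_le_iff₀ hμ₂).1 ?_⟩
    linarith [sq_nonneg (1 - μ₁ / μ₂)]
  have hmem : ∀ r ∈ Ioc (0 : ℝ) 1, ρ * r ∈ Ioo (0 : ℝ) 1 := fun r hr =>
    ⟨mul_pos hρ0 hr.1, mul_lt_one_of_nonneg_of_lt_one_left hρ0.le hρ1 hr.2⟩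
  refine hu.not_isSupersolution hG hk (fun r hr => mul_nonneg hμ₁ (hW₁ r hr))
    (hv.contDiffOn.continuousOn.comp (by fun_prop) hmem)
    (hv.pos _ (hmem 1 (right_mem_Ioc.2 one_pos)))
    ((hv.comp_mul hG ⟨hρ0, hρ1.le⟩).weight_mono fun r hr => ?_)
  calc μ₁ * W₁ r ≤ ρ ^ 2 * μ₂ * W₁ r := mul_le_mul_of_nonneg_right hρμ (hW₁ r hr)
    _ ≤ ρ ^ 2 * μ₂ * W₂ (ρ * r) :=
        mul_le_mul_of_nonneg_left
          (hW r hr _ ⟨mul_pos hρ0 hr.1, mul_le_of_le_one_left hr.1.le hρ1.le⟩) (by positivity)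
    _ = ρ ^ 2 * (μ₂ * W₂ (ρ * r)) := mul_assoc _ _ _

end IsDirichletSolution

end Solutions

section Compactness

variable {G : ℝ → ℝ → ℝ} {lam Lam n : ℝ} {B V u w φ : ℝ → ℝ}

/-- `φ` is the profile of a radial barrier, singular at most at the origin, for the sources bounded
by `B`: the slopes of the solutions of `G(u'', u' / r) + f = 0` with `0 ≤ f ≤ B` are controlled by
those of `φ`. -/
structure IsBarrier (G : ℝ → ℝ → ℝ) (B φ : ℝ → ℝ) : Prop where
  continuousOn : ContinuousOn φ (Icc 0 1)
  contDiffOn : ContDiffOn ℝ 2 φ (Ioo 0 1)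
  radialOp_le : ∀ r ∈ Ioo (0 : ℝ) 1, radialOp G φ r ≤ -(B r)

theorem exists_isBarrier_rpow (hG : IsRadialElliptic G lam Lam n) (hk : 1 ≤ lam / Lam * n)
    {p : ℝ} (hp : 0 < p) {M : ℝ} (hM : 0 < M) :
    ∃ φ, IsBarrier G (fun r => M * r ^ (p - 2)) φ := by
  have hneg : p * G (1 - p) (-1) < 0 :=
    mul_neg_of_pos_of_neg hp (hG.map_one_sub_neg_one_neg hk hp)
  refine ⟨fun x => M / -(p * G (1 - p) (-1)) * -x ^ p, ?_, ?_, fun r hr => ?_⟩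
  · exact continuousOn_const.mul (continuousOn_id.rpow_const fun _ _ => Or.inr hp.le).neg
  · exact contDiffOn_const.mul (contDiffOn_id.rpow_const_of_ne fun x hx => hx.1.ne').neg
  · rw [radialOp_const_mul hG (div_pos hM (neg_pos.2 hneg)), radialOp_neg_rpow hG hp hr.1,
      ← mul_assoc, div_neg, neg_mul, div_mul_cancel₀ _ hneg.ne, neg_mul]

theorem IsBarrier.bddAbove_image_sub (hφ : IsBarrier G B φ) (hu : ContinuousOn u (Icc 0 1)) :
    BddAbove ((fun r => u r - φ r) '' Ioo 0 1) :=
  (isCompact_Icc.bddAbove_image (hu.sub hφ.continuousOn)).mono (image_mono Ioo_subset_Icc_self)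

namespace IsDirichletSolution

section Bounds

variable (hG : IsRadialElliptic G lam Lam n) (hk : 1 ≤ lam / Lam * n)
  (hu : IsDirichletSolution G V u) (hφ : IsBarrier G B φ)
  (hV : ∀ r ∈ Ioo (0 : ℝ) 1, V r ∈ Icc 0 (B r))
include hG hk hu hφ hV

theorem radialOp_barrier_le {r : ℝ} (hr : r ∈ Ioo (0 : ℝ) 1) :
    radialOp G φ r ≤ radialOp G u r := by
  have hu1 := (hu.mem_Icc hG hk (fun r hr => (hV r hr).1) (Ioo_subset_Icc_self hr)).2
  calc radialOp G φ r ≤ -(B r) := hφ.radialOp_le r hr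
    _ ≤ -(V r * u r) := neg_le_neg ((mul_le_of_le_one_right (hV r hr).1 hu1).trans (hV r hr).2)
    _ = radialOp G u r := (hu.radialOp_eq r hr).symm

theorem dist_le_dist_barrier : ∀ x ∈ Icc (0 : ℝ) 1, ∀ y ∈ Icc (0 : ℝ) 1,
    dist (u x) (u y) ≤ dist (φ x) (φ y) := by
  intro x hx y hy
  wlog hxy : x ≤ y generalizing x y
  · rw [dist_comm, dist_comm (φ x)]
    exact this y hy x hx (le_of_not_ge hxy)
  have hanti : u y ≤ u x := hu.isSupersolution.antitoneOn hG hk (fun r hr => (hV r hr).1)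
    (convex_Icc 0 1) interior_Icc hu.continuousOn hx hy hxy
  have hmono : u x - φ x ≤ u y - φ y := monotoneOn_sub_of_radialOp_le hG hk hu.contDiffOn
    hφ.contDiffOn (fun r => hu.radialOp_barrier_le hG hk hφ hV)
    (hφ.bddAbove_image_sub hu.continuousOn) (convex_Icc 0 1) interior_Icc hu.continuousOn
    hφ.continuousOn hx hy hxy
  rw [dist_eq, dist_eq, abs_of_nonneg (sub_nonneg.2 hanti)]
  exact (by linarith : u x - u y ≤ φ x - φ y).trans (le_abs_self _)

theorem abs_deriv_le_abs_deriv_barrier {r : ℝ} (hr : r ∈ Ioo (0 : ℝ) 1) :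
    |deriv u r| ≤ |deriv φ r| := by
  have hle : deriv u r ≤ 0 := deriv_nonpos_of_radialOp_nonpos hG hk hu.contDiffOn
    (fun r => hu.isSupersolution.radialOp_nonpos fun r hr => (hV r hr).1)
    (fun r hr => (hu.isSupersolution.pos r hr).le) hr
  have hge : deriv φ r ≤ deriv u r := deriv_le_deriv_of_radialOp_le hG hk hu.contDiffOn
    hφ.contDiffOn (fun r => hu.radialOp_barrier_le hG hk hφ hV)
    (hφ.bddAbove_image_sub hu.continuousOn) hr
  rw [abs_of_nonpos hle, abs_of_nonpos (hge.trans hle)]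
  exact neg_le_neg hge

theorem abs_deriv_deriv_le {r : ℝ} (hr : r ∈ Ioo (0 : ℝ) 1) :
    |deriv (deriv u) r| ≤ (B r + Lam * (n * |deriv φ r / r|)) / lam := by
  have hB : |radialOp G u r| ≤ B r := by
    rw [hu.radialOp_eq r hr, abs_neg]
    have hur := hu.mem_Icc hG hk (fun r hr => (hV r hr).1) (Ioo_subset_Icc_self hr)
    rw [abs_of_nonneg (mul_nonneg (hV r hr).1 hur.1)]
    exact (mul_le_of_le_one_right (hV r hr).1 hur.2).trans (hV r hr).2
  have hdiv : |deriv u r / r| ≤ |deriv φ r / r| := by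
    rw [abs_div, abs_div]
    exact div_le_div_of_nonneg_right (hu.abs_deriv_le_abs_deriv_barrier hG hk hφ hV hr)
      (abs_nonneg r)
  have hle := hG.abs_sub_le (deriv (deriv u) r) 0 (deriv u r / r) 0
  rw [hG.map_zero, sub_zero, sub_zero, sub_zero] at hle
  refine hle.trans (div_le_div_of_nonneg_right (add_le_add hB ?_) hG.lam_pos.le)
  exact mul_le_mul_of_nonneg_left (mul_le_mul_of_nonneg_left hdiv hG.n_nonneg) hG.Lam_pos.le

end Bounds

section Limits

variable {ι : Type*} {l : Filter ι} {Vs us : ι → ℝ → ℝ} {w' : ℝ → ℝ}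

theorem exists_tendstoLocallyUniformlyOn_deriv_deriv (hG : IsRadialElliptic G lam Lam n)
    (hus : ∀ i, IsDirichletSolution G (Vs i) (us i))
    (hw : TendstoLocallyUniformlyOn us w l (Ioo 0 1)) (hwc : ContinuousOn w (Ioo 0 1))
    (hw' : TendstoLocallyUniformlyOn (fun i => deriv (us i)) w' l (Ioo 0 1))
    (hw'c : ContinuousOn w' (Ioo 0 1))
    (hVs : TendstoLocallyUniformlyOn Vs V l (Ioo 0 1)) (hVc : ContinuousOn V (Ioo 0 1)) :
    ∃ w'' : ℝ → ℝ, (∀ r ∈ Ioo (0 : ℝ) 1, G (w'' r) (w' r / r) = -(V r * w r)) ∧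
      TendstoLocallyUniformlyOn (fun i => deriv (deriv (us i))) w'' l (Ioo 0 1) := by
  obtain ⟨I, hI, hGI⟩ := hG.exists_continuous_solve_left
  have hus'' : ∀ i, ∀ r ∈ Ioo (0 : ℝ) 1,
      deriv (deriv (us i)) r = I (deriv (us i) r / r, -(Vs i r * us i r)) :=
    fun i r hr => (hGI _ _ _).1 ((hus i).radialOp_eq r hr)
  refine ⟨fun r => I (w' r / r, -(V r * w r)), fun r _ => (hGI _ _ _).2 rfl, ?_⟩
  have hc : ContinuousOn (fun r => I (w' r / r, -(V r * w r))) (Ioo 0 1) :=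
    hI.comp_continuousOn ((hw'c.div continuousOn_id fun r hr => hr.1.ne').prodMk
      (hVc.mul hwc).neg)
  rw [tendstoLocallyUniformlyOn_iff_tendsto_prod_nhds isOpen_Ioo hc]
  rw [tendstoLocallyUniformlyOn_iff_tendsto_prod_nhds isOpen_Ioo ‹_›] at hw hw' hVs
  intro r hr
  have harg := ((hw' r hr).div tendsto_snd hr.1.ne').prodMk_nhds ((hVs r hr).mul (hw r hr)).neg
  refine ((hI.tendsto _).comp harg).congr' ?_
  filter_upwards [tendsto_snd.eventually (isOpen_Ioo.mem_nhds hr)] with y hy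
  exact (hus'' y.1 y.2 hy).symm

theorem of_tendsto [l.NeBot] (hG : IsRadialElliptic G lam Lam n) (hk : 1 ≤ lam / Lam * n)
    (hus : ∀ i, IsDirichletSolution G (Vs i) (us i))
    (hVs0 : ∀ i, ∀ r ∈ Ioo (0 : ℝ) 1, 0 ≤ Vs i r) (hw : TendstoUniformlyOn us w l (Icc 0 1))
    (hw' : TendstoLocallyUniformlyOn (fun i => deriv (us i)) w' l (Ioo 0 1))
    (hVs : TendstoLocallyUniformlyOn Vs V l (Ioo 0 1)) (hVc : ContinuousOn V (Ioo 0 1)) :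
    IsDirichletSolution G V w := by
  have hwc : ContinuousOn w (Icc 0 1) :=
    hw.continuousOn (Frequently.of_forall fun i => (hus i).continuousOn)
  have hw'c : ContinuousOn w' (Ioo 0 1) := hw'.continuousOn <| Frequently.of_forall fun i =>
    (contDiffOn_one_deriv isOpen_Ioo (hus i).contDiffOn).continuousOn
  obtain ⟨w'', hGw, hw''⟩ := exists_tendstoLocallyUniformlyOn_deriv_deriv hG hus
    (hw.mono Ioo_subset_Icc_self).tendstoLocallyUniformlyOn (hwc.mono Ioo_subset_Icc_self)
    hw' hw'c hVs hVc
  have hlim : ∀ r ∈ Icc (0 : ℝ) 1, Tendsto (fun i => us i r) l (nhds (w r)) :=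
    fun r hr => hw.tendsto_at hr
  obtain ⟨hw2, hderiv, hderiv2⟩ := contDiffOn_two_of_tendstoLocallyUniformlyOn isOpen_Ioo
    (fun i => (hus i).contDiffOn) (fun r hr => hlim r (Ioo_subset_Icc_self hr)) hw' hw''
  have hw0 : w 0 = 1 := tendsto_nhds_unique (hlim 0 (left_mem_Icc.2 zero_le_one)) <| by
    simp only [(hus _).map_zero, tendsto_const_nhds]
  have hw1 : w 1 = 0 := tendsto_nhds_unique (hlim 1 (right_mem_Icc.2 zero_le_one)) <| by
    simp only [(hus _).map_one, tendsto_const_nhds]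
  have heq : ∀ r ∈ Ioo (0 : ℝ) 1, radialOp G w r = -(V r * w r) := fun r hr => by
    rw [radialOp, hderiv hr, hderiv2 hr, hGw r hr]
  have hnonneg : ∀ r ∈ Ioo (0 : ℝ) 1, 0 ≤ w r := fun r hr =>
    ge_of_tendsto' (hlim r (Ioo_subset_Icc_self hr))
      fun i => ((hus i).pos r (Ioo_subset_Ico_self hr)).le
  have hV0 : ∀ r ∈ Ioo (0 : ℝ) 1, 0 ≤ V r := fun r hr =>
    ge_of_tendsto' (hVs.tendsto_at hr) fun i => hVs0 i r hr
  have hop : ∀ r ∈ Ioo (0 : ℝ) 1, radialOp G w r ≤ 0 := fun r hr =>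
    (heq r hr).trans_le (neg_nonpos.2 (mul_nonneg (hV0 r hr) (hnonneg r hr)))
  exact ⟨hwc, hw2, hw0, hw1, fun r => pos_of_radialOp_nonpos hG hk hw2
    (hwc.mono Ico_subset_Icc_self) hop hnonneg (hw0 ▸ one_pos), heq⟩

end Limits

theorem exists_subseq_tendstoUniformlyOn (hG : IsRadialElliptic G lam Lam n)
    (hk : 1 ≤ lam / Lam * n) {Vs us : ℕ → ℝ → ℝ}
    (hus : ∀ i, IsDirichletSolution G (Vs i) (us i)) (hφ : IsBarrier G B φ)
    (hVs : ∀ i, ∀ r ∈ Ioo (0 : ℝ) 1, Vs i r ∈ Icc 0 (B r)) :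
    ∃ ψ : ℕ → ℕ, StrictMono ψ ∧ ∃ w, TendstoUniformlyOn (fun i => us (ψ i)) w atTop (Icc 0 1) := by
  have hequi : EquicontinuousOn us (Icc 0 1) := equicontinuousOn_of_dist_le hφ.continuousOn
    fun i => (hus i).dist_le_dist_barrier hG hk hφ (hVs i)
  obtain ⟨ψ, hψ, w, -, hw⟩ := exists_subseq_tendstoLocallyUniformlyOn hequi fun r hr =>
    (Metric.isBounded_Icc 0 1).subset <| range_subset_iff.2 fun i =>
      (hus i).mem_Icc hG hk (fun r hr => (hVs i r hr).1) hr
  exact ⟨ψ, hψ, w, (tendstoLocallyUniformlyOn_iff_tendstoUniformlyOn_of_compact isCompact_Icc).1 hw⟩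

theorem exists_subseq_tendstoLocallyUniformlyOn_deriv (hG : IsRadialElliptic G lam Lam n)
    (hk : 1 ≤ lam / Lam * n) {Vs us : ℕ → ℝ → ℝ}
    (hus : ∀ i, IsDirichletSolution G (Vs i) (us i)) (hφ : IsBarrier G B φ)
    (hB : ContinuousOn B (Ioo 0 1)) (hVs : ∀ i, ∀ r ∈ Ioo (0 : ℝ) 1, Vs i r ∈ Icc 0 (B r)) :
    ∃ ψ : ℕ → ℕ, StrictMono ψ ∧
      ∃ w', TendstoLocallyUniformlyOn (fun i => deriv (us (ψ i))) w' atTop (Ioo 0 1) := by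
  have hderiv_div : ContinuousOn (fun r => deriv φ r / r) (Ioo 0 1) :=
    (contDiffOn_one_deriv isOpen_Ioo hφ.contDiffOn).continuousOn.div continuousOn_id
      fun r hr => hr.1.ne'
  have hbound : ContinuousOn (fun r => (B r + Lam * (n * |deriv φ r / r|)) / lam) (Ioo 0 1) := by
    fun_prop
  have hequi : EquicontinuousOn (fun i => deriv (us i)) (Ioo 0 1) :=
    equicontinuousOn_of_norm_deriv_le isOpen_Ioo (fun i r hr =>
      (hasDerivAt_deriv_of_contDiffOn_two isOpen_Ioo (hus i).contDiffOn hr).differentiableAt)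
      hbound fun i r hr => (hus i).abs_deriv_deriv_le hG hk hφ (hVs i) hr
  have := isOpen_Ioo.locallyCompactSpace (X := ℝ) (s := Ioo 0 1)
  obtain ⟨ψ, hψ, w', -, hw'⟩ := exists_subseq_tendstoLocallyUniformlyOn hequi fun r hr =>
    isBounded_iff_forall_norm_le.2 ⟨|deriv φ r|, forall_mem_range.2 fun i =>
      (hus i).abs_deriv_le_abs_deriv_barrier hG hk hφ (hVs i) hr⟩
  exact ⟨ψ, hψ, w', hw'⟩

theorem exists_subseq_tendstoUniformlyOn_isDirichletSolution (hG : IsRadialElliptic G lam Lam n)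
    (hk : 1 ≤ lam / Lam * n) {Vs us : ℕ → ℝ → ℝ}
    (hus : ∀ i, IsDirichletSolution G (Vs i) (us i)) (hφ : IsBarrier G B φ)
    (hB : ContinuousOn B (Ioo 0 1)) (hVs : ∀ i, ∀ r ∈ Ioo (0 : ℝ) 1, Vs i r ∈ Icc 0 (B r))
    (hlim : TendstoLocallyUniformlyOn Vs V atTop (Ioo 0 1)) (hVc : ContinuousOn V (Ioo 0 1)) :
    ∃ ψ : ℕ → ℕ, StrictMono ψ ∧ ∃ w, IsDirichletSolution G V w ∧
      TendstoUniformlyOn (fun i => us (ψ i)) w atTop (Icc 0 1) := by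
  obtain ⟨ψ₁, hψ₁, w, hw⟩ := exists_subseq_tendstoUniformlyOn hG hk hus hφ hVs
  obtain ⟨ψ₂, hψ₂, w', hw'⟩ := exists_subseq_tendstoLocallyUniformlyOn_deriv hG hk
    (fun i => hus (ψ₁ i)) hφ hB fun i => hVs (ψ₁ i)
  have hw₂ : TendstoUniformlyOn (fun i => us (ψ₁ (ψ₂ i))) w atTop (Icc 0 1) :=
    hw.seq_tendstoUniformlyOn ψ₂ hψ₂.tendsto_atTop
  have hlim₂ : TendstoLocallyUniformlyOn (fun i => Vs (ψ₁ (ψ₂ i))) V atTop (Ioo 0 1) :=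
    fun s hs x hx => (hlim s hs x hx).imp fun t ht =>
      ⟨ht.1, (hψ₁.comp hψ₂).tendsto_atTop.eventually ht.2⟩
  exact ⟨ψ₁ ∘ ψ₂, hψ₁.comp hψ₂, w, of_tendsto hG hk (fun i => hus (ψ₁ (ψ₂ i)))
    (fun i r hr => (hVs _ r hr).1) hw₂ hw' hlim₂ hVc, hw₂⟩

end IsDirichletSolution

end Compactness

section Eigenvalues

open scoped Topology

/-- The weight `(r² + ε²)^(-γ/2)`, which regularizes the singular weight `r^(-γ)`. -/
def regWeight (γ ε r : ℝ) : ℝ :=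
  (r ^ 2 + ε ^ 2) ^ (-(γ / 2))

section regWeight

variable {γ ε δ r s : ℝ}

theorem regWeight_zero (γ : ℝ) (hr : 0 ≤ r) : regWeight γ 0 r = r ^ (-γ) := by
  rw [regWeight, zero_pow two_ne_zero, add_zero, ← rpow_natCast_mul hr]
  congr 1
  push_cast
  ring

theorem regWeight_nonneg (γ ε r : ℝ) : 0 ≤ regWeight γ ε r :=
  rpow_nonneg (by positivity) _

theorem regWeight_le_regWeight (hγ : 0 ≤ γ) (hδ : 0 ≤ δ) (hδε : δ ≤ ε) (hs : 0 < s)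
    (hsr : s ≤ r) : regWeight γ ε r ≤ regWeight γ δ s :=
  rpow_le_rpow_of_nonpos (by positivity) (by gcongr) (by linarith)

theorem continuousAt_regWeight (γ : ℝ) (hr : r ≠ 0) :
    ContinuousAt (fun y : ℝ × ℝ => regWeight γ y.1 y.2) (ε, r) :=
  ContinuousAt.rpow_const (by fun_prop) (Or.inl (by positivity))

theorem continuousOn_const_mul_rpow (c p : ℝ) :
    ContinuousOn (fun r : ℝ => c * r ^ p) (Ioo 0 1) :=
  continuousOn_const.mul (continuousOn_id.rpow_const fun _ hr => Or.inl hr.1.ne')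

theorem tendstoLocallyUniformlyOn_mul_regWeight {ι : Type*} {l : Filter ι} {c e : ι → ℝ} {m : ℝ}
    (γ : ℝ) (hc : Tendsto c l (𝓝 m)) (he : Tendsto e l (𝓝 0)) :
    TendstoLocallyUniformlyOn (fun i r => c i * regWeight γ (e i) r) (fun r => m * r ^ (-γ)) l
      (Ioo 0 1) := by
  rw [tendstoLocallyUniformlyOn_iff_tendsto_prod_nhds isOpen_Ioo
    (continuousOn_const_mul_rpow m (-γ))]
  intro r hr
  have harg : Tendsto (fun y : ι × ℝ => (e y.1, y.2)) (l ×ˢ 𝓝 r) (𝓝 (0, r)) :=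
    (he.comp tendsto_fst).prodMk_nhds tendsto_snd
  have hweight : Tendsto (fun y : ℝ × ℝ => regWeight γ y.1 y.2) (𝓝 (0, r))
      (𝓝 (regWeight γ 0 r)) := continuousAt_regWeight γ hr.1.ne'
  have hmul := (hc.comp tendsto_fst).mul (hweight.comp harg)
  rwa [regWeight_zero γ hr.1.le] at hmul

end regWeight

variable {G : ℝ → ℝ → ℝ} {lam Lam n γ : ℝ} {μ : ℝ → ℝ} {U : ℝ → ℝ → ℝ}

theorem monotoneOn_regularized_eigenvalue (hG : IsRadialElliptic G lam Lam n)
    (hk : 1 ≤ lam / Lam * n) (hγ : 0 ≤ γ)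
    (hU : ∀ ε ∈ Ioc (0 : ℝ) 1, IsDirichletSolution G (fun r => μ ε * regWeight γ ε r) (U ε)) :
    MonotoneOn μ (Ioc 0 1) := fun δ hδ ε hε hδε =>
  (hU ε hε).le_of_isSupersolution hG hk (hU δ hδ).isSupersolution
    (fun r _ => regWeight_nonneg γ ε r)
    fun _ _ _ hs => regWeight_le_regWeight hγ hδ.1.le hδε hs.1 hs.2

theorem exists_tendsto_regularized_eigenvalue (hG : IsRadialElliptic G lam Lam n)
    (hk : 1 ≤ lam / Lam * n) (hγ : 0 ≤ γ)
    (hU : ∀ ε ∈ Ioc (0 : ℝ) 1, IsDirichletSolution G (fun r => μ ε * regWeight γ ε r) (U ε)) :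
    ∃ m, Tendsto μ (𝓝[>] 0) (𝓝 m) :=
  ⟨_, ((monotoneOn_regularized_eigenvalue hG hk hγ hU).mono
    Ioo_subset_Ioc_self).tendsto_nhdsWithin_Ioo_right (nonempty_Ioo.2 one_pos)
    ⟨0, forall_mem_image.2 fun ε hε => (hU ε (Ioo_subset_Ioc_self hε)).nonneg hG hk
      fun r _ => regWeight_nonneg γ ε r⟩⟩

theorem exists_subseq_tendstoUniformlyOn_eigenfunction (hG : IsRadialElliptic G lam Lam n)
    (hk : 1 ≤ lam / Lam * n) (hγ0 : 0 ≤ γ) (hγ2 : γ < 2)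
    (hU : ∀ ε ∈ Ioc (0 : ℝ) 1, IsDirichletSolution G (fun r => μ ε * regWeight γ ε r) (U ε))
    {m : ℝ} (hm : Tendsto μ (𝓝[>] 0) (𝓝 m)) {e : ℕ → ℝ} (he : ∀ i, e i ∈ Ioc (0 : ℝ) 1)
    (he0 : Tendsto e atTop (𝓝 0)) :
    ∃ ψ : ℕ → ℕ, StrictMono ψ ∧ ∃ u, IsDirichletSolution G (fun r => m * r ^ (-γ)) u ∧
      TendstoUniformlyOn (fun i => U (e (ψ i))) u atTop (Icc 0 1) := by
  have hμ0 : ∀ ε ∈ Ioc (0 : ℝ) 1, 0 ≤ μ ε := fun ε hε =>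
    (hU ε hε).nonneg hG hk fun r _ => regWeight_nonneg γ ε r
  have h1 : (1 : ℝ) ∈ Ioc (0 : ℝ) 1 := right_mem_Ioc.2 one_pos
  obtain ⟨φ, hφ⟩ := exists_isBarrier_rpow hG hk (sub_pos.2 hγ2)
    (add_pos_of_nonneg_of_pos (hμ0 1 h1) one_pos)
  rw [show 2 - γ - 2 = -γ by ring] at hφ
  have hweight : ∀ i, ∀ r ∈ Ioo (0 : ℝ) 1,
      μ (e i) * regWeight γ (e i) r ∈ Icc 0 ((μ 1 + 1) * r ^ (-γ)) := by
    intro i r hr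
    refine ⟨mul_nonneg (hμ0 _ (he i)) (regWeight_nonneg _ _ _), ?_⟩
    rw [← regWeight_zero γ hr.1.le]
    refine mul_le_mul ?_ (regWeight_le_regWeight hγ0 le_rfl (he i).1.le hr.1 le_rfl)
      (regWeight_nonneg _ _ _) (by linarith [hμ0 1 h1])
    exact (monotoneOn_regularized_eigenvalue hG hk hγ0 hU (he i) h1 (he i).2).trans
      (le_add_of_nonneg_right zero_le_one)
  have he0' : Tendsto e atTop (𝓝[>] 0) :=
    tendsto_nhdsWithin_iff.2 ⟨he0, Eventually.of_forall fun i => (he i).1⟩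
  exact IsDirichletSolution.exists_subseq_tendstoUniformlyOn_isDirichletSolution hG hk
    (fun i => hU (e i) (he i)) hφ (continuousOn_const_mul_rpow _ _) hweight
    (tendstoLocallyUniformlyOn_mul_regWeight γ (hm.comp he0') he0)
    (continuousOn_const_mul_rpow _ _)

variable {N : ℕ} {F : Matrix (Fin N) (Fin N) ℝ → ℝ}

theorem radialEV_eq_sSup_isSupersolution (N : ℕ) (F : Matrix (Fin N) (Fin N) ℝ → ℝ) (γ : ℝ) :
    radialEV N F γ =
      sSup {μ | ∃ v, IsSupersolution (radialReduction N F) (fun r => μ * r ^ (-γ)) v} := by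
  refine congrArg sSup (Set.ext fun μ => exists_congr fun v => ?_)
  have hiff : ∀ r, F (Dmat N (deriv (deriv v) r) (deriv v r / r)) + μ * v r * r ^ (-γ) ≤ 0 ↔
      radialOp (radialReduction N F) v r ≤ -(μ * r ^ (-γ) * v r) := fun r => by
    rw [le_neg_iff_add_nonpos_right, mul_right_comm, radialOp, radialReduction]
  simp only [hiff]
  exact ⟨fun ⟨h, h', h''⟩ => ⟨h, h', h''⟩, fun ⟨h, h', h''⟩ => ⟨h, h', h''⟩⟩

theorem IsDirichletSolution.radialEV_eq (hG : IsRadialElliptic (radialReduction N F) lam Lam n)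
    (hk : 1 ≤ lam / Lam * n) (hγ : 0 ≤ γ) {m : ℝ} {u : ℝ → ℝ}
    (hu : IsDirichletSolution (radialReduction N F) (fun r => m * r ^ (-γ)) u) :
    radialEV N F γ = m := by
  rw [radialEV_eq_sSup_isSupersolution]
  refine IsGreatest.csSup_eq ⟨⟨u, hu.isSupersolution⟩, fun μ ⟨v, hv⟩ => ?_⟩
  exact hu.le_of_isSupersolution hG hk hv (fun r hr => rpow_nonneg hr.1.le _)
    fun r hr s hs => rpow_le_rpow_of_nonpos hs.1 hs.2 (neg_nonpos.2 hγ)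

theorem isDirichletSolution_radialReduction_iff {c : ℝ} {W u : ℝ → ℝ} :
    IsDirichletSolution (radialReduction N F) (fun r => c * W r) u ↔
      ContinuousOn u (Icc 0 1) ∧ ContDiffOn ℝ 2 u (Ioo 0 1) ∧ u 0 = 1 ∧
        (∀ r ∈ Ico (0 : ℝ) 1, 0 < u r) ∧ u 1 = 0 ∧
        ∀ r ∈ Ioo (0 : ℝ) 1,
          F (Dmat N (deriv (deriv u) r) (deriv u r / r)) + c * u r * W r = 0 := by
  have hiff : ∀ r, F (Dmat N (deriv (deriv u) r) (deriv u r / r)) + c * u r * W r = 0 ↔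
      radialOp (radialReduction N F) u r = -(c * W r * u r) := fun r => by
    rw [eq_neg_iff_add_eq_zero, mul_right_comm, radialOp, radialReduction]
  simp only [hiff]
  exact ⟨fun ⟨hc, hd, h0, h1, hpos, heq⟩ => ⟨hc, hd, h0, hpos, h1, heq⟩,
    fun ⟨hc, hd, h0, hpos, h1, heq⟩ => ⟨hc, hd, h0, h1, hpos, heq⟩⟩

end Eigenvalues

theorem stmt18_general {N : ℕ} {lam Lam : ℝ} (hlam : 0 < lam) (hlL : lam ≤ Lam)
    (hNp : 2 ≤ lam / Lam * ((N : ℝ) - 1) + 1) {F : Matrix (Fin N) (Fin N) ℝ → ℝ}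
    (hF : UnifElliptic N lam Lam F) (hF' : PosHomog N F) {γ : ℝ} (hγ0 : 0 ≤ γ) (hγ2 : γ < 2)
    {μ : ℝ → ℝ} {U : ℝ → ℝ → ℝ}
    (hU : ∀ ε ∈ Ioc (0 : ℝ) 1,
      ContinuousOn (U ε) (Icc 0 1) ∧ ContDiffOn ℝ 2 (U ε) (Ioo 0 1) ∧ U ε 0 = 1 ∧
      (∀ r ∈ Ico (0 : ℝ) 1, 0 < U ε r) ∧ U ε 1 = 0 ∧
      ∀ r ∈ Ioo (0 : ℝ) 1, F (Dmat N (deriv (deriv (U ε)) r) (deriv (U ε) r / r))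
        + μ ε * U ε r * (r ^ 2 + ε ^ 2) ^ (-(γ / 2)) = 0) :
    Tendsto μ (nhdsWithin 0 (Ioi 0)) (nhds (radialEV N F γ)) ∧
    ∃ e : ℕ → ℝ, (∀ n, e n ∈ Ioc (0 : ℝ) 1) ∧ Tendsto e atTop (nhds 0) ∧
      ∃ u : ℝ → ℝ, ContinuousOn u (Icc 0 1) ∧ ContDiffOn ℝ 2 u (Ioo 0 1) ∧
        u 0 = 1 ∧ (∀ r ∈ Ico (0 : ℝ) 1, 0 < u r) ∧ u 1 = 0 ∧
        (∀ r ∈ Ioo (0 : ℝ) 1, F (Dmat N (deriv (deriv u) r) (deriv u r / r))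
          + radialEV N F γ * u r * r ^ (-γ) = 0) ∧
        TendstoUniformlyOn (fun n => U (e n)) u atTop (Icc 0 1) := by
  have hk : 1 ≤ lam / Lam * ((N : ℝ) - 1) := by linarith
  have hN : N ≠ 0 := by
    rintro rfl
    have hratio : 0 < lam / Lam := div_pos hlam (hlam.trans_le hlL)
    norm_num at hk
    linarith
  have hG := isRadialElliptic_radialReduction hN hlam hF hF'
  have hU' : ∀ ε ∈ Ioc (0 : ℝ) 1,
      IsDirichletSolution (radialReduction N F) (fun r => μ ε * regWeight γ ε r) (U ε) :=
    fun ε hε => isDirichletSolution_radialReduction_iff.2 (hU ε hε)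
  obtain ⟨m, hm⟩ := exists_tendsto_regularized_eigenvalue hG hk hγ0 hU'
  have he : ∀ i : ℕ, 1 / ((i : ℝ) + 1) ∈ Ioc (0 : ℝ) 1 := fun i =>
    ⟨Nat.one_div_pos_of_nat, (div_le_one (by positivity)).2 (by linarith [i.cast_nonneg (α := ℝ)])⟩
  have he0 := tendsto_one_div_add_atTop_nhds_zero_nat (𝕜 := ℝ)
  obtain ⟨ψ, hψ, u, hu, hlim⟩ :=
    exists_subseq_tendstoUniformlyOn_eigenfunction hG hk hγ0 hγ2 hU' hm he he0
  obtain rfl : radialEV N F γ = m := hu.radialEV_eq hG hk hγ0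
  obtain ⟨hc, hd, h0, hpos, h1, heq⟩ := isDirichletSolution_radialReduction_iff.1 hu
  exact ⟨hm, _, fun i => he (ψ i), he0.comp hψ.tendsto_atTop, u, hc, hd, h0, hpos, h1, heq, hlim⟩

theorem stmt18 (N : ℕ) (hN : 2 ≤ N) (lam Lam : ℝ) (hlam : 0 < lam) (hlL : lam ≤ Lam)
    (hNp : 2 < lam / Lam * ((N : ℝ) - 1) + 1)
    (F : Matrix (Fin N) (Fin N) ℝ → ℝ)
    (hF1 : UnifElliptic N lam Lam F) (hF2 : RotInvariant N F) (hF3 : PosHomog N F)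
    (γ : ℝ) (hγ0 : 0 < γ) (hγ2 : γ < 2)
    (U : ℝ → ℝ → ℝ)
    (hU : ∀ ε ∈ Ioc (0:ℝ) 1,
      ContinuousOn (U ε) (Icc 0 1) ∧ ContDiffOn ℝ 2 (U ε) (Ico 0 1) ∧
      derivWithin (U ε) (Ici 0) 0 = 0 ∧
      (∀ r ∈ Ico (0:ℝ) 1, 0 < U ε r) ∧ U ε 0 = 1 ∧ U ε 1 = 0 ∧
      (∀ r ∈ Ioo (0:ℝ) 1,
        F (Dmat N (deriv (deriv (U ε)) r) (deriv (U ε) r / r))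
          + epsEV N F γ ε * U ε r * (r ^ 2 + ε ^ 2) ^ (-(γ / 2)) = 0)) :
    Tendsto (fun ε => epsEV N F γ ε) (nhdsWithin 0 (Ioi 0)) (nhds (radialEV N F γ)) ∧
    ∃ e : ℕ → ℝ, (∀ n, e n ∈ Ioc (0:ℝ) 1) ∧ Tendsto e atTop (nhds 0) ∧
      ∃ u : ℝ → ℝ, ContinuousOn u (Icc 0 1) ∧ ContDiffOn ℝ 2 u (Ioo 0 1) ∧
        u 0 = 1 ∧ (∀ r ∈ Ico (0:ℝ) 1, 0 < u r) ∧ u 1 = 0 ∧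
        (∀ r ∈ Ioo (0:ℝ) 1,
          F (Dmat N (deriv (deriv u) r) (deriv u r / r))
            + radialEV N F γ * u r * r ^ (-γ) = 0) ∧
        TendstoUniformlyOn (fun n => U (e n)) u atTop (Icc 0 1) := by
  refine stmt18_general hlam hlL hNp.le hF1 hF3 hγ0.le hγ2 fun ε hε => ?_
  obtain ⟨hc, hd, -, hpos, h0, h1, heq⟩ := hU ε hε
  exact ⟨hc, hd.mono Ioo_subset_Ico_self, h0, hpos, h1, heq⟩

end
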